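/- For every natural number n, if n ≡ 21, 28, or 42 (mod 49), then the number of 8-regular partitions b_8(n) is even. -/

import Mathlib

/-- The number of `m`-regular partitions of `n`, i.e. partitions of `n`
in which no part is divisible by `m`. -/
noncomputable def numRegularPartitions (m n : ℕ) : ℕ :=
  Nat.card {π : n.Partition // ∀ j ∈ π.parts, ¬ m ∣ j}

open PowerSeries PowerSeries.WithPiTopology Finset Filter Topology

namespace Reg8

/-! ### The finite form of the Gauss identity due to Shanks -/

section Shanks
variable {R : Type*} [CommRing R]

/-- Odd product. -/
def oddP (q : R) (n : ℕ) : R := ∏ j ∈ range n, (1 - q ^ (2 * j + 1))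

/-- Even product. -/
def evP (q : R) (s n : ℕ) : R := ∏ j ∈ Ico s n, (1 - q ^ (2 * j + 2))

/-- The sum of Shanks. -/
def shanks (q : R) (n : ℕ) : R := ∑ s ∈ range n, oddP q s * evP q s n * q ^ (s * (2 * n + 1))

lemma shanks_tele (q : R) (n m : ℕ) (hm : m ≤ n) :
    ∑ s ∈ range m, oddP q s * evP q s n * q ^ (s * (2 * n + 1)) *
      ((1 - q ^ (2 * n + 2)) * q ^ (2 * s) - (1 - q ^ (2 * n + 1))) =
    (1 - q ^ (2 * m)) * oddP q m * evP q m n * q ^ (m * (2 * n + 1)) := by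
  induction m with
  | zero => simp
  | succ m ih =>
    rw [sum_range_succ, ih (by omega)]
    have h1 : oddP q (m + 1) = oddP q m * (1 - q ^ (2 * m + 1)) := by
      simp [oddP, prod_range_succ]
    have h2 : evP q m n = (1 - q ^ (2 * m + 2)) * evP q (m + 1) n := by
      simp only [evP]
      rw [prod_eq_prod_Ico_succ_bot (by omega)]
    rw [h1, h2]
    ring

lemma shanks_succ (q : R) (n : ℕ) :
    shanks q (n + 1) = (1 - q ^ (2 * n + 1)) * shanks q n +
      oddP q (n + 1) * (q ^ (n * (2 * n + 1)) + q ^ ((n + 1) * (2 * n + 1))) := by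
  have h := shanks_tele q n n le_rfl
  have h1 : oddP q (n + 1) = oddP q n * (1 - q ^ (2 * n + 1)) := by
    simp [oddP, prod_range_succ]
  have h3 : ∀ s ∈ range (n+1), evP q s (n + 1) = evP q s n * (1 - q ^ (2 * n + 2)) := by
    intro s hs
    simp only [evP]
    rw [prod_Ico_succ_top (by simp at hs; omega)]
  have h4 : evP q n n = 1 := by simp [evP]
  have h5 : shanks q (n + 1) = ∑ s ∈ range (n + 1),
      oddP q s * evP q s n * q ^ (s * (2 * n + 1)) * ((1 - q ^ (2 * n + 2)) * q ^ (2 * s)) := by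
    unfold shanks
    refine sum_congr rfl fun s hs => ?_
    rw [h3 s hs]
    ring
  rw [h5, sum_range_succ]
  simp only [mul_sub _ _ (1 - q ^ (2 * n + 1)), sum_sub_distrib] at h
  rw [← sum_mul] at h
  change _ - shanks q n * _ = _ at h
  rw [sub_eq_iff_eq_add] at h
  rw [h, h1, h4]
  ring

lemma shanks_eq (q : R) (n : ℕ) :
    oddP q n * ∑ k ∈ range (2 * n), q ^ (k * (k + 1) / 2) = shanks q n := by
  induction n with
  | zero => simp [shanks]
  | succ n ih =>
    rw [shanks_succ, ← ih, show 2 * (n + 1) = 2 * n + 1 + 1 by ring, sum_range_succ,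
      sum_range_succ]
    have e1 : 2 * n * (2 * n + 1) / 2 = n * (2 * n + 1) := by
      rw [mul_assoc]; simp
    have e2 : (2 * n + 1) * (2 * n + 1 + 1) / 2 = (n + 1) * (2 * n + 1) := by
      rw [show (2 * n + 1) * (2 * n + 1 + 1) = 2 * ((n + 1) * (2 * n + 1)) by ring]; simp
    have h1 : oddP q (n + 1) = oddP q n * (1 - q ^ (2 * n + 1)) := by
      simp [oddP, prod_range_succ]
    rw [e1, e2, h1]
    ring

lemma shanks_dvd (q : R) (n : ℕ) : q ^ (2 * n + 1) ∣ shanks q (n+1) - evP q 0 (n+1) := by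
  unfold shanks
  rw [sum_range_succ']
  simp only [oddP, zero_mul, pow_zero, mul_one, range_zero, prod_empty, one_mul, add_sub_cancel_right]
  refine dvd_sum fun s _ => ?_
  refine Dvd.dvd.mul_left ?_ _
  exact pow_dvd_pow _ (by nlinarith)

/-- Full product. -/
def fullP (q : R) (n : ℕ) : R := ∏ j ∈ range n, (1 - q ^ (j + 1))

lemma odd_mul_ev (q : R) (n : ℕ) : oddP q n * evP q 0 n = fullP q (2 * n) := by
  induction n with
  | zero => simp [oddP, evP, fullP]
  | succ n ih =>
    have : fullP q (2 * (n+1)) = fullP q (2 * n) * (1 - q ^ (2*n+1)) * (1 - q ^ (2 * n + 2)) := by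
      rw [show 2 * (n + 1) = 2 * n + 1 + 1 by ring]
      simp only [fullP, prod_range_succ]
    rw [this, ← ih]
    simp only [oddP, evP, ← range_eq_Ico, prod_range_succ]
    ring

lemma ev_eq [CharP R 2] (q : R) (n : ℕ) : evP q 0 n = fullP q n ^ 2 := by
  simp only [evP, fullP, ← range_eq_Ico, ← prod_pow]
  refine prod_congr rfl fun j _ => ?_
  rw [sub_pow_char, one_pow]
  ring

lemma dvd_final [CharP R 2] (q : R) (n : ℕ) :
    q ^ (2 * n + 1) ∣ fullP q (2 * (n + 1)) * ∑ k ∈ range (2 * (n + 1)), q ^ (k * (k + 1) / 2)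
      - fullP q (n + 1) ^ 4 := by
  rw [← odd_mul_ev, mul_right_comm, shanks_eq, show fullP q (n+1) ^ 4 =
    evP q 0 (n+1) * evP q 0 (n+1) by rw [ev_eq]; ring, ← sub_mul]
  exact Dvd.dvd.mul_right (shanks_dvd q n) _

end Shanks

/-! ### Power series mod 2 -/

abbrev K := ZMod 2

instance : CharP K⟦X⟧ 2 :=
  charP_of_injective_algebraMap (algebraMap K K⟦X⟧).injective 2

lemma tri_inj : Function.Injective (fun k : ℕ => k * (k + 1) / 2) := by
  apply StrictMono.injective
  apply strictMono_nat_of_lt_succ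
  intro k
  have : (k+1) * (k+1+1) = k * (k+1) + (k+1) * 2 := by ring
  simp only [this]
  omega

open Classical in
/-- Theta series. -/
noncomputable def theta : K⟦X⟧ := PowerSeries.mk fun n => if ∃ k : ℕ, k * (k+1) / 2 = n then 1 else 0

open Classical in
/-- Theta series in `X ^ 2`. -/
noncomputable def theta2 : K⟦X⟧ := PowerSeries.mk fun n => if ∃ k : ℕ, k * (k+1) = n then 1 else 0

open Classical in
lemma hasSum_gen (f : ℕ → ℕ) (hf : Function.Injective f) :
    HasSum (fun k => (X : K⟦X⟧) ^ f k) (PowerSeries.mk fun n => if ∃ k : ℕ, f k = n then 1 else 0) := by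
  set T : K⟦X⟧ := PowerSeries.mk fun n => if ∃ k : ℕ, f k = n then 1 else 0 with hT
  suffices HasSum ((fun n ↦ C (T.coeff n) * X ^ n) ∘ f) T by
    convert this using 1
    ext1 k
    simp [hT]
  rw [hf.hasSum_iff fun n hn ↦ by
    have : ¬ ∃ k, f k = n := hn
    simp [hT, this]]
  simpa [monomial_eq_C_mul_X_pow] using T.hasSum_of_monomials_self

lemma theta2_eq : theta2 = theta ^ 2 := by
  have h1 : HasSum _ theta := hasSum_gen _ tri_inj
  have h2 : HasSum _ theta2 := hasSum_gen (fun k => k * (k+1)) (by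
    intro a b h
    apply tri_inj
    simp only at h ⊢
    rw [h])
  have h3 := h1.map (frobenius K⟦X⟧ 2).toAddMonoidHom (by
    change Continuous (fun x : K⟦X⟧ => x ^ 2)
    exact continuous_pow 2)
  refine h2.unique ?_
  change HasSum (fun k : ℕ => (X ^ (k * (k+1) / 2) : K⟦X⟧) ^ 2) (theta ^ 2) at h3
  convert! h3 using 2 with k
  rw [← pow_mul, Nat.div_mul_cancel (Nat.even_mul_succ_self k).two_dvd]

/-- Euler series. -/
noncomputable abbrev E : K⟦X⟧ := pentagonalSeries K

lemma E_theta : E * theta = E ^ 4 := by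
  have hE : Tendsto (fun n => fullP (X : K⟦X⟧) n) atTop (𝓝 E) :=
    (hasProd_one_sub_X_pow K).tendsto_prod_nat
  have hT : Tendsto (fun n => ∑ k ∈ range n, (X : K⟦X⟧) ^ (k * (k + 1) / 2)) atTop (𝓝 theta) :=
    (hasSum_gen _ tri_inj).tendsto_sum_nat
  have t1 : Tendsto (fun n : ℕ => n + 1) atTop atTop := tendsto_add_atTop_nat 1
  have t2 : Tendsto (fun n : ℕ => 2 * (n + 1)) atTop atTop :=
    tendsto_atTop_mono (fun n => by simp only [id]; omega) tendsto_id
  have h1 := ((hE.comp t2).mul (hT.comp t2)).sub ((hE.comp t1).pow 4)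
  have h2 : Tendsto (fun n => fullP (X : K⟦X⟧) (2 * (n + 1)) *
      ∑ k ∈ range (2 * (n + 1)), (X : K⟦X⟧) ^ (k * (k + 1) / 2)
      - fullP X (n + 1) ^ 4) atTop (𝓝 0) := by
    rw [tendsto_iff_coeff_tendsto]
    refine fun d ↦ tendsto_atTop_of_eventually_const (i₀ := d) fun i hi ↦ ?_
    rw [map_zero]
    exact X_pow_dvd_iff.mp (dvd_final X i) d (by omega)
  exact sub_eq_zero.mp (tendsto_nhds_unique h1 h2)

lemma E_ne : E ≠ 0 := by
  intro h
  have := coeff_pentagonalSeries_pentagonal K 0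
  rw [show pentagonalSeries K = 0 from h] at this
  simp at this

lemma E7 : E ^ 7 = E * theta2 := by
  have h : theta = E ^ 3 := mul_left_cancel₀ E_ne (by rw [E_theta]; ring)
  rw [theta2_eq, h]; ring

lemma gf : (PowerSeries.mk fun n => (#(Nat.Partition.restricted n (¬ 8 ∣ ·)) : K)) = E ^ 7 := by
  rw [Nat.Partition.powerSeriesMk_card_restricted_eq_powerSeriesMk_card_countRestricted K
    (by norm_num)]
  refine (Nat.Partition.hasProd_powerSeriesMk_card_countRestricted K (by norm_num)).unique ?_
  have h := (hasProd_one_sub_X_pow K).pow 7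
  have e : (fun i : ℕ => ∑ j ∈ range 8, (X : K⟦X⟧) ^ ((i + 1) * j)) =
      fun i => (1 - X ^ (i + 1)) ^ 7 := ?_
  · rw [e]
    exact h
  ext1 i
  simp only [pow_mul]
  generalize (X : K⟦X⟧) ^ (i + 1) = Y
  have h2 : (2 : K⟦X⟧) = 0 := CharTwo.two_eq_zero
  simp only [sum_range_succ, range_zero, sum_empty]
  linear_combination (4 * Y - 10 * Y ^ 2 + 18 * Y ^ 3 - 17 * Y ^ 4 + 11 * Y ^ 5 - 3 * Y ^ 6 + Y ^ 7) * h2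

end Reg8
namespace Reg8

/-- The solution set. -/
noncomputable def sol (N : ℤ) : Finset (ℤ × ℤ) :=
  (Icc 1 N ×ˢ Icc (-N) N).filter fun p => p.1 ^ 2 + 6 * p.2 ^ 2 = N ∧ 7 ∣ p.1 - p.2

lemma mem_sol {N x y : ℤ} : (x, y) ∈ sol N ↔ 0 < x ∧ x ^ 2 + 6 * y ^ 2 = N ∧ 7 ∣ x - y := by
  simp only [sol, mem_filter, mem_product, mem_Icc]
  constructor
  · rintro ⟨⟨⟨h1, -⟩, -⟩, h2, h3⟩
    exact ⟨by omega, h2, h3⟩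
  · rintro ⟨h1, h2, h3⟩
    refine ⟨⟨⟨by omega, by nlinarith⟩, ?_, ?_⟩, h2, h3⟩
    · nlinarith [sq_nonneg (y+1)]
    · nlinarith [sq_nonneg (y-1)]

/-- The involution. -/
def inv (p : ℤ × ℤ) : ℤ × ℤ :=
  let t := (p.1 - p.2) / 7
  if 0 < p.2 - 5 * t then (p.2 - 5 * t, p.2 + 2 * t) else (-(p.2 - 5 * t), -(p.2 + 2 * t))

lemma inv_eq (y t : ℤ) : inv (y + 7 * t, y) =
    if 0 < y - 5 * t then (y - 5 * t, y + 2 * t) else (-(y - 5 * t), -(y + 2 * t)) := by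
  have : (y + 7 * t - y) / 7 = t := by omega
  simp only [inv, this]

lemma sq_mod7 (x : ℤ) : x ^ 2 % 7 = 0 ∨ x ^ 2 % 7 = 1 ∨ x ^ 2 % 7 = 2 ∨ x ^ 2 % 7 = 4 := by
  have : x % 7 = 0 ∨ x % 7 = 1 ∨ x % 7 = 2 ∨ x % 7 = 3 ∨ x % 7 = 4 ∨ x % 7 = 5 ∨ x % 7 = 6 := by
    omega
  rcases this with h | h | h | h | h | h | h <;> simp [pow_two, Int.mul_emod, h]

lemma sol_even (N : ℤ) (hodd : N % 2 = 1) (h : N % 49 = 21 ∨ N % 49 = 35 ∨ N % 49 = 42) :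
    Even #(sol N) := by
  have key : (#(sol N) : ZMod 2) = 0 := by
    rw [Finset.card_eq_sum_ones, Nat.cast_sum]
    refine Finset.sum_involution (fun p _ => inv p) ?_ ?_ ?_ ?_
    · intro a _
      decide
    · rintro ⟨x, y⟩ hp _
      obtain ⟨h1, h2, t, ht⟩ := mem_sol.mp hp
      obtain rfl : x = y + 7 * t := by omega
      rw [inv_eq]
      intro hh
      split_ifs at hh with hs
      · simp only [Prod.mk.injEq] at hh
        obtain rfl : t = 0 := by omega
        have : 7 * y ^ 2 = N := by rw [← h2]; ring
        have := sq_mod7 y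
        omega
      · simp only [Prod.mk.injEq] at hh
        obtain rfl : y = -t := by omega
        have : 2 * (21 * t ^ 2) = N := by rw [← h2]; ring
        omega
    · rintro ⟨x, y⟩ hp
      obtain ⟨h1, h2, t, ht⟩ := mem_sol.mp hp
      obtain rfl : x = y + 7 * t := by omega
      rw [inv_eq]
      split_ifs with hs
      · rw [mem_sol]
        refine ⟨hs, by rw [← h2]; ring, by omega⟩
      · rw [mem_sol]
        refine ⟨?_, by rw [← h2]; ring, by omega⟩
        rcases lt_or_eq_of_le (not_lt.mp hs) with h0 | h0
        · omega
        · exfalso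
          obtain rfl : y = 5 * t := by omega
          have : 2 * (147 * t ^ 2) = N := by rw [← h2]; ring
          omega
    · rintro ⟨x, y⟩ hp
      obtain ⟨h1, h2, t, ht⟩ := mem_sol.mp hp
      obtain rfl : x = y + 7 * t := by omega
      simp only [inv_eq]
      split_ifs with hs
      · rw [show y - 5 * t = (y + 2 * t) + 7 * (-t) by ring, inv_eq, if_pos (by linarith)]
        ext <;> ring
      · rw [show -(y - 5 * t) = -(y + 2 * t) + 7 * t by ring, inv_eq, if_neg (by linarith)]
        ext <;> ring
  exact (ZMod.natCast_eq_zero_iff_even).mp key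

open Classical in
/-- Representing pairs. -/
noncomputable def pairs (n : ℕ) : Finset (ℕ × ℕ) :=
  (antidiagonal n).filter fun p => (∃ k, pentagonal k = p.1) ∧ ∃ m : ℕ, m * (m + 1) = p.2

lemma sol_shape (n : ℕ) (x y : ℤ) (h2 : x ^ 2 + 6 * y ^ 2 = 24 * n + 7) :
    (∃ k : ℤ, x ^ 2 = (6 * k - 1) ^ 2) ∧ ∃ m : ℕ, y ^ 2 = (2 * m + 1) ^ 2 := by
  have hx2 : x % 2 = 1 := by
    by_contra hx
    obtain ⟨z, rfl⟩ : ∃ z, x = 2 * z := ⟨x / 2, by omega⟩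
    ring_nf at h2
    omega
  have hy2 : y % 2 = 1 := by
    by_contra hy
    obtain ⟨z, rfl⟩ : ∃ z, y = 2 * z := ⟨y / 2, by omega⟩
    obtain ⟨w, rfl⟩ : ∃ z, x = 2 * z + 1 := ⟨x / 2, by omega⟩
    ring_nf at h2
    obtain ⟨e, he⟩ := (Int.even_mul_succ_self w)
    have : w + w ^ 2 = 2 * e := by rw [← two_mul] at he; rw [← he]; ring
    omega
  have hx3 : x % 3 ≠ 0 := by
    intro hx
    obtain ⟨z, rfl⟩ : ∃ z, x = 3 * z := ⟨x / 3, by omega⟩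
    ring_nf at h2
    omega
  have ⟨k, hk⟩ : ∃ k : ℤ, x ^ 2 = (6 * k - 1) ^ 2 := by
    rcases (by omega : x % 6 = 1 ∨ x % 6 = 5) with h6 | h6
    · exact ⟨-(x / 6), by rw [show 6 * -(x/6) - 1 = -x by omega]; ring⟩
    · exact ⟨x / 6 + 1, by rw [show 6 * (x/6 + 1) - 1 = x by omega]⟩
  have ⟨m, hm⟩ : ∃ m : ℕ, y ^ 2 = (2 * m + 1) ^ 2 := by
    rcases le_or_gt 0 y with h6 | h6
    · exact ⟨(y / 2).toNat, by rw [show (2 * (y / 2).toNat + 1 : ℤ) = y by omega]⟩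
    · exact ⟨(-y / 2).toNat, by rw [show (2 * (-y / 2).toNat + 1 : ℤ) = -y by omega]; ring⟩
  exact ⟨⟨k, hk⟩, m, hm⟩

lemma card_pairs (n : ℕ) (h : n % 49 = 21 ∨ n % 49 = 28 ∨ n % 49 = 42) :
    #(sol (24 * n + 7)) = #(pairs n) := by
  refine Finset.card_bij (fun p _ => (((p.1 ^ 2 - 1) / 24).toNat, ((p.2 ^ 2 - 1) / 4).toNat)) ?_ ?_ ?_
  · rintro ⟨x, y⟩ hp
    obtain ⟨h1, h2, h3⟩ := mem_sol.mp hp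
    obtain ⟨⟨k, hk⟩, m, hm⟩ := sol_shape n x y h2
    have e1 : ((x ^ 2 - 1) / 24).toNat = pentagonal k := by
      have : x ^ 2 - 1 = 24 * (pentagonal k : ℤ) := by
        linear_combination hk - 12 * two_mul_natCast_pentagonal k
      omega
    have e2 : ((y ^ 2 - 1) / 4).toNat = m * (m + 1) := by
      have : y ^ 2 - 1 = 4 * ((m * (m + 1) : ℕ) : ℤ) := by
        push_cast
        linear_combination hm
      omega
    simp only [pairs, mem_filter, HasAntidiagonal.mem_antidiagonal, e1, e2]
    refine ⟨?_, ⟨k, rfl⟩, ⟨m, rfl⟩⟩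
    zify
    have := two_mul_natCast_pentagonal k
    have h24 : 24 * ((pentagonal k : ℤ) + m * (m + 1)) = 24 * n := by
      linear_combination h2 + 12 * this - hk - 6 * hm
    omega
  · rintro ⟨x, y⟩ hp ⟨x', y'⟩ hp' heq
    obtain ⟨h1, h2, h3⟩ := mem_sol.mp hp
    obtain ⟨h1', h2', h3'⟩ := mem_sol.mp hp'
    simp only [Prod.mk.injEq] at heq
    obtain ⟨⟨k, hk⟩, m, hm⟩ := sol_shape n x y h2
    obtain ⟨⟨k', hk'⟩, m', hm'⟩ := sol_shape n x' y' h2'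
    have a1 : x ^ 2 - 1 = 24 * (pentagonal k : ℤ) := by
      linear_combination hk - 12 * two_mul_natCast_pentagonal k
    have a2 : x' ^ 2 - 1 = 24 * (pentagonal k' : ℤ) := by
      linear_combination hk' - 12 * two_mul_natCast_pentagonal k'
    have hxx : x ^ 2 = x' ^ 2 := by omega
    have hyy : y ^ 2 = y' ^ 2 := by omega
    have hx : x = x' := by
      rcases sq_eq_sq_iff_eq_or_eq_neg.mp hxx with h | h <;> omega
    subst hx
    rcases sq_eq_sq_iff_eq_or_eq_neg.mp hyy with h' | h'
    · rw [h']
    · exfalso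
      obtain ⟨u, rfl⟩ : ∃ u, x = 7 * u := ⟨x / 7, by omega⟩
      obtain ⟨v, rfl⟩ : ∃ v, y = 7 * v := ⟨y / 7, by omega⟩
      have : 49 * (u ^ 2 + 6 * v ^ 2) = 24 * n + 7 := by rw [← h2]; ring
      omega
  · rintro ⟨a, b⟩ hab
    simp only [pairs, mem_filter, HasAntidiagonal.mem_antidiagonal] at hab
    obtain ⟨hn, ⟨k, hk⟩, ⟨m, hm⟩⟩ := hab
    have hpk := two_mul_natCast_pentagonal k
    rw [hk] at hpk
    zify at hm
    have hab : (a : ℤ) + b = n := by exact_mod_cast hn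
    have ⟨x, hx0, hx⟩ : ∃ x : ℤ, 0 < x ∧ x ^ 2 = (6 * k - 1) ^ 2 :=
      ⟨|6 * k - 1|, abs_pos.mpr (by omega), sq_abs _⟩
    have e : x ^ 2 + 6 * (2 * m + 1 : ℤ) ^ 2 = 24 * n + 7 := by
      linear_combination hx - 12 * hpk + 24 * hm + 24 * hab
    have ⟨y, hy, h7⟩ : ∃ y : ℤ, y ^ 2 = (2 * m + 1) ^ 2 ∧ 7 ∣ x - y := by
      have : (7 : ℤ) ∣ (x - (2 * m + 1)) * (x + (2 * m + 1)) := by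
        have : (x - (2 * m + 1)) * (x + (2 * m + 1)) = 24 * n + 7 - 7 * (2 * m + 1 : ℤ) ^ 2 := by
          rw [← e]; ring
        rw [this]
        omega
      rcases (Int.Prime.dvd_mul' (p := 7) (by norm_num) this) with h | h
      · exact ⟨_, rfl, h⟩
      · exact ⟨-(2 * m + 1), by ring, by rwa [sub_neg_eq_add]⟩
    refine ⟨(x, y), mem_sol.mpr ⟨hx0, by rw [hy, e], h7⟩, ?_⟩
    have e1 : x ^ 2 - 1 = 24 * a := by linear_combination hx - 12 * hpk
    have e2 : y ^ 2 - 1 = 4 * b := by linear_combination hy + 4 * hm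
    simp only [e1, e2, Prod.mk.injEq]
    omega



lemma main (n : ℕ) (h : n % 49 = 21 ∨ n % 49 = 28 ∨ n % 49 = 42) :
    (E * theta2).coeff n = 0 := by
  classical
  rw [PowerSeries.coeff_mul]
  have : ∀ p ∈ antidiagonal n, E.coeff p.1 * theta2.coeff p.2 =
      if (∃ k, pentagonal k = p.1) ∧ ∃ m : ℕ, m * (m + 1) = p.2 then 1 else 0 := by
    rintro ⟨a, b⟩ -
    by_cases h1 : ∃ k, pentagonal k = a
    · have hE : E.coeff a = 1 := by
        obtain ⟨k, rfl⟩ := h1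
        rw [coeff_pentagonalSeries_pentagonal]
        rcases Int.even_or_odd k with hk | hk
        · simp [Int.negOnePow_even k hk]
        · rw [Int.negOnePow_odd k hk]
          decide
      simp [hE, h1, theta2]
    · have hE : E.coeff a = 0 := coeff_pentagonalSeries_eq_zero K h1
      simp [hE, h1]
  rw [sum_congr rfl this, sum_boole]
  have h2 : Even #(pairs n) := by
    rw [← card_pairs n h]
    exact sol_even _ (by omega) (by omega)
  rw [ZMod.natCast_eq_zero_iff_even]
  convert h2 using 2
  unfold pairs
  congr

end Reg8

theorem stmt_19 (n : ℕ) (h : n % 49 = 21 ∨ n % 49 = 28 ∨ n % 49 = 42) :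
    Even (numRegularPartitions 8 n) := by
  have h1 : numRegularPartitions 8 n = #(Nat.Partition.restricted n (¬ 8 ∣ ·)) := by
    unfold numRegularPartitions Nat.Partition.restricted
    rw [Nat.card_eq_fintype_card, Fintype.card_subtype]
  rw [h1, ← ZMod.natCast_eq_zero_iff_even]
  have h2 := congrArg (PowerSeries.coeff n) Reg8.gf
  rw [PowerSeries.coeff_mk, Reg8.E7, Reg8.main n h] at h2
  exact h2
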